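/- Let L, M be differential graded Lie algebras over a field K of characteristic 0 and i : L → M a Cartan homotopy, i.e. a degree −1 linear map with i_{[a,b]} = [i_a, d_M i_b] and [i_a, i_b] = 0 for all a,b ∈ L. Then the Lie derivative l : L → M, l_a = d_M i_a + i_{d_L a}, is a morphism of differential graded Lie algebras; moreover the Cartan homotopy conditions are equivalent to i_{[a,b]} = [i_a, l_b] and [i_a, i_b] = 0, and, as a morphism of complexes, l is homotopic to 0 with homotopy i. -/

import Mathlib

/-!
Basic homotopical algebra of differential graded Lie algebras over a field of
characteristic zero, following [Iacono, "Deformations and obstructions of pairs (X,D)"].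

A differential graded Lie algebra (DGLA) is encoded as a `K`-module together with an
internal `ℤ`-grading (a family of submodules whose direct sum is the whole module),
a differential of degree `+1` squaring to zero, and a bracket which is graded
skew-symmetric, satisfies the graded Jacobi identity and the graded Leibniz rule.
-/

universe u v w

/-- A `ℤ`-graded cochain complex structure on a `K`-module `V`: an internal grading
together with a differential of degree `+1` squaring to zero. -/
structure CochainStruct (K : Type u) [Field K] (V : Type v) [AddCommGroup V] [Module K V] :
    Type (max u v) where
  grading : ℤ → Submodule K V
  isInternal : DirectSum.IsInternal grading
  d : V →ₗ[K] V
  d_degree : ∀ i : ℤ, ∀ x ∈ grading i, d x ∈ grading (i + 1)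
  d_sq : ∀ x : V, d (d x) = 0

namespace CochainStruct

variable {K : Type u} [Field K] {V : Type v} [AddCommGroup V] [Module K V]
  {W : Type w} [AddCommGroup W] [Module K W]

/-- Degree `i` cocycles. -/
def cocycles (c : CochainStruct K V) (i : ℤ) : Submodule K V :=
  c.grading i ⊓ LinearMap.ker c.d

/-- Degree `i` coboundaries, as a submodule of the degree `i` cocycles. -/
def coboundaries (c : CochainStruct K V) (i : ℤ) : Submodule K (c.cocycles i) :=
  Submodule.comap (c.cocycles i).subtype (c.grading i ⊓ LinearMap.range c.d)

/-- The degree `i` cohomology of a graded cochain complex. -/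
def cohomology (c : CochainStruct K V) (i : ℤ) : Type v :=
  c.cocycles i ⧸ c.coboundaries i

instance (c : CochainStruct K V) (i : ℤ) : AddCommGroup (c.cohomology i) :=
  inferInstanceAs (AddCommGroup (c.cocycles i ⧸ c.coboundaries i))

instance (c : CochainStruct K V) (i : ℤ) : Module K (c.cohomology i) :=
  inferInstanceAs (Module K (c.cocycles i ⧸ c.coboundaries i))

end CochainStruct

/-- A (degree zero) morphism of graded cochain complexes. -/
structure CochainMap {K : Type u} [Field K] {V : Type v} {W : Type w}
    [AddCommGroup V] [Module K V] [AddCommGroup W] [Module K W]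
    (c : CochainStruct K V) (c' : CochainStruct K W) : Type (max u v w) where
  toFun : V →ₗ[K] W
  map_grading : ∀ i : ℤ, ∀ x ∈ c.grading i, toFun x ∈ c'.grading i
  map_d : ∀ x : V, toFun (c.d x) = c'.d (toFun x)

namespace CochainMap

variable {K : Type u} [Field K] {V : Type v} {W : Type w}
  [AddCommGroup V] [Module K V] [AddCommGroup W] [Module K W]
  {c : CochainStruct K V} {c' : CochainStruct K W}

/-- The induced map on cocycles. -/
def cocyclesMap (f : CochainMap c c') (i : ℤ) : c.cocycles i →ₗ[K] c'.cocycles i :=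
  f.toFun.restrict (p := c.cocycles i) (q := c'.cocycles i) fun x hx => by
    rcases Submodule.mem_inf.mp hx with ⟨h1, h2⟩
    refine Submodule.mem_inf.mpr ⟨f.map_grading i x h1, ?_⟩
    simp only [LinearMap.mem_ker] at h2 ⊢
    rw [← f.map_d, h2, map_zero]

/-- The induced map in cohomology. -/
def cohMap (f : CochainMap c c') (i : ℤ) :
    c.cohomology i →ₗ[K] c'.cohomology i :=
  Submodule.mapQ (c.coboundaries i) (c'.coboundaries i) (f.cocyclesMap i) (by
    rintro ⟨x, hx⟩ hmem
    simp only [CochainStruct.coboundaries, Submodule.mem_comap] at hmem ⊢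
    rcases Submodule.mem_inf.mp hmem with ⟨h1, h2⟩
    refine Submodule.mem_inf.mpr ⟨?_, ?_⟩
    · exact f.map_grading i x h1
    · rcases h2 with ⟨y, hy⟩
      exact ⟨f.toFun y, by
        have := f.map_d y
        simp only [Submodule.coe_subtype] at hy ⊢
        rw [← this, hy]
        rfl⟩)

end CochainMap

/-- A differential graded Lie algebra structure on a `K`-module `L`:
a graded cochain complex together with a degree zero graded bracket which is
graded skew-symmetric and satisfies the graded Jacobi identity and the graded
Leibniz rule. -/
structure DGLAStruct (K : Type u) [Field K] (L : Type v) [AddCommGroup L] [Module K L]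
    extends CochainStruct K L where
  bracket : L →ₗ[K] L →ₗ[K] L
  bracket_degree : ∀ i j : ℤ, ∀ x ∈ grading i, ∀ y ∈ grading j, bracket x y ∈ grading (i + j)
  bracket_skew : ∀ i j : ℤ, ∀ x ∈ grading i, ∀ y ∈ grading j,
    bracket x y = -(((-1 : K) ^ (i * j)) • bracket y x)
  bracket_jacobi : ∀ i j : ℤ, ∀ x ∈ grading i, ∀ y ∈ grading j, ∀ z : L,
    bracket x (bracket y z) =
      bracket (bracket x y) z + ((-1 : K) ^ (i * j)) • bracket y (bracket x z)
  bracket_leibniz : ∀ i : ℤ, ∀ x ∈ grading i, ∀ y : L,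
    d (bracket x y) = bracket (d x) y + ((-1 : K) ^ i) • bracket x (d y)

/-- A morphism of differential graded Lie algebras. -/
structure DGLAStructHom {K : Type u} [Field K] {L : Type v} {M : Type w}
    [AddCommGroup L] [Module K L] [AddCommGroup M] [Module K M]
    (g : DGLAStruct K L) (h : DGLAStruct K M) : Type (max u v w) where
  toFun : L →ₗ[K] M
  map_grading : ∀ i : ℤ, ∀ x ∈ g.grading i, toFun x ∈ h.grading i
  map_d : ∀ x : L, toFun (g.d x) = h.d (toFun x)
  map_bracket : ∀ x y : L, toFun (g.bracket x y) = h.bracket (toFun x) (toFun y)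

namespace DGLAStructHom

variable {K : Type u} [Field K] {L : Type v} {M : Type w}
  [AddCommGroup L] [Module K L] [AddCommGroup M] [Module K M]
  {g : DGLAStruct K L} {h : DGLAStruct K M}

/-- The underlying morphism of complexes of a morphism of DGLAs. -/
def toCochainMap (f : DGLAStructHom g h) :
    CochainMap g.toCochainStruct h.toCochainStruct :=
  ⟨f.toFun, f.map_grading, f.map_d⟩

/-- A quasi-isomorphism of DGLAs is a morphism inducing bijections in cohomology. -/
def IsQuasiIso (f : DGLAStructHom g h) : Prop :=
  ∀ i : ℤ, Function.Bijective (f.toCochainMap.cohMap i)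

end DGLAStructHom

/-- A bundled differential graded Lie algebra over `K`. -/
structure DGLA (K : Type u) [Field K] : Type (max u (v + 1)) where
  carrier : Type v
  [acg : AddCommGroup carrier]
  [mod : Module K carrier]
  str : DGLAStruct K carrier

attribute [instance] DGLA.acg DGLA.mod

namespace DGLA

variable {K : Type u} [Field K]

/-- Two DGLAs are related if there is a quasi-isomorphism from the first to the second. -/
def qisRel : DGLA.{u, v} K → DGLA.{u, v} K → Prop := fun X Y =>
  ∃ f : DGLAStructHom X.str Y.str, f.IsQuasiIso

/-- Homotopy equivalence of DGLAs: the equivalence relation generated by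
quasi-isomorphisms. -/
def HomotopyEquiv (X Y : DGLA.{u, v} K) : Prop :=
  Relation.EqvGen qisRel X Y

/-- A DGLA is abelian if its bracket is trivial. -/
def IsAbelian (X : DGLA.{u, v} K) : Prop :=
  ∀ x y : X.carrier, X.str.bracket x y = 0

/-- A DGLA is homotopy abelian if it is homotopy equivalent (i.e. quasi-isomorphic,
under the equivalence relation generated by quasi-isomorphisms) to an abelian DGLA. -/
def HomotopyAbelian (X : DGLA.{u, v} K) : Prop :=
  ∃ Y : DGLA.{u, v} K, Y.IsAbelian ∧ X.HomotopyEquiv Y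

end DGLA

/-- A zig-zag of morphisms of DGLAs (the backwards arrows being quasi-isomorphisms):
a morphism in the homotopy category of DGLAs, i.e. an `L∞` morphism of DGLAs. -/
inductive ZigZag {K : Type u} [Field K] : DGLA.{u, v} K → DGLA.{u, v} K → Type (max u (v + 1))
  | refl (X : DGLA.{u, v} K) : ZigZag X X
  | fwd {X Y Z : DGLA.{u, v} K} (f : DGLAStructHom X.str Y.str) (t : ZigZag Y Z) : ZigZag X Z
  | bwd {X Y Z : DGLA.{u, v} K} (f : DGLAStructHom Y.str X.str) (hf : f.IsQuasiIso)
      (t : ZigZag Y Z) : ZigZag X Z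

/-- The map induced in cohomology by a zig-zag of morphisms of DGLAs. -/
noncomputable def ZigZag.cohMap {K : Type u} [Field K] :
    ∀ {X Y : DGLA.{u, v} K}, ZigZag X Y → ∀ i : ℤ,
      X.str.toCochainStruct.cohomology i →ₗ[K] Y.str.toCochainStruct.cohomology i
  | _, _, .refl _, _ => LinearMap.id
  | _, _, .fwd f t, i => (t.cohMap i).comp (f.toCochainMap.cohMap i)
  | _, _, .bwd f hf t, i =>
      (t.cohMap i).comp
        ((LinearEquiv.ofBijective (f.toCochainMap.cohMap i) (hf i)).symm.toLinearMap)

/-!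
The differential graded vector space `M[t,dt] = M ⊗ K[t,dt]` of polynomial differential
forms on the affine line with coefficients in a DGLA `M`, homotopy fibres, and Cartan
homotopies.  An element of `M[t,dt]` is written `p(t) + q(t) dt` and encoded as the pair
of coefficient families `(p, q) : (ℕ →₀ M) × (ℕ →₀ M)`.
-/

/-- `M[t,dt]`: polynomial forms on the affine line with coefficients in `M`,
encoded as pairs `(p, q)` with `p(t) + q(t) dt`. -/
abbrev PolyDt (K : Type u) [Field K] (M : Type v) [AddCommGroup M] [Module K M] : Type v :=
  (ℕ →₀ M) × (ℕ →₀ M)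

section PolyDt

variable {K : Type u} [Field K] {M : Type v} [AddCommGroup M] [Module K M]

/-- Evaluation at `t = 0`, `dt = 0`. -/
noncomputable def evAt0 : PolyDt K M →ₗ[K] M :=
  (Finsupp.lapply 0).comp (LinearMap.fst K (ℕ →₀ M) (ℕ →₀ M))

/-- Evaluation at `t = 1`, `dt = 0`. -/
noncomputable def evAt1 : PolyDt K M →ₗ[K] M :=
  ((Finsupp.lsum K fun _ : ℕ => (LinearMap.id : M →ₗ[K] M)) :
      (ℕ →₀ M) →ₗ[K] M).comp (LinearMap.fst K (ℕ →₀ M) (ℕ →₀ M))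

/-- The element `t^n m` of `M[t,dt]`. -/
noncomputable def inlP (n : ℕ) (m : M) : PolyDt K M := (Finsupp.single n m, 0)

/-- The element `t^n dt m` of `M[t,dt]`. -/
noncomputable def inrP (n : ℕ) (m : M) : PolyDt K M := (0, Finsupp.single n m)

/-- The degree `j` part of `M[t,dt]` (with `t` of degree `0` and `dt` of degree `1`). -/
def polyGrading (h : DGLAStruct K M) (j : ℤ) : Submodule K (PolyDt K M) where
  carrier := {x | (∀ n : ℕ, x.1 n ∈ h.grading j) ∧ ∀ n : ℕ, x.2 n ∈ h.grading (j - 1)}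
  zero_mem' := ⟨fun n => by simp, fun n => by simp⟩
  add_mem' := by
    rintro x y ⟨hx1, hx2⟩ ⟨hy1, hy2⟩
    refine ⟨fun n => ?_, fun n => ?_⟩
    · have : (x + y).1 n = x.1 n + y.1 n := by simp
      rw [this]; exact (h.grading j).add_mem (hx1 n) (hy1 n)
    · have : (x + y).2 n = x.2 n + y.2 n := by simp
      rw [this]; exact (h.grading (j - 1)).add_mem (hx2 n) (hy2 n)
  smul_mem' := by
    rintro c x ⟨hx1, hx2⟩
    refine ⟨fun n => ?_, fun n => ?_⟩
    · have : (c • x).1 n = c • x.1 n := by simp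
      rw [this]; exact (h.grading j).smul_mem c (hx1 n)
    · have : (c • x).2 n = c • x.2 n := by simp
      rw [this]; exact (h.grading (j - 1)).smul_mem c (hx2 n)

/-- The property that a DGLA structure `mt` on `M[t,dt]` is *the* DGLA of polynomial
forms on the affine line with coefficients in `(M, h)`: it is characterised by its
grading and by its differential and bracket on the elements `t^n m` and `t^n dt m`. -/
structure IsPolyFormsDGLA (h : DGLAStruct K M) (mt : DGLAStruct K (PolyDt K M)) : Prop where
  grading_eq : ∀ j : ℤ, mt.grading j = polyGrading h j
  d_inl : ∀ (n : ℕ) (m : M), mt.d (inlP n m) = inlP n (h.d m) + inrP (n - 1) (n • m)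
  d_inr : ∀ (n : ℕ) (m : M), mt.d (inrP n m) = -inrP n (h.d m)
  bracket_ll : ∀ (n n' : ℕ) (m m' : M),
    mt.bracket (inlP n m) (inlP n' m') = inlP (n + n') (h.bracket m m')
  bracket_lr : ∀ i : ℤ, ∀ m ∈ h.grading i, ∀ (n n' : ℕ) (m' : M),
    mt.bracket (inlP n m) (inrP n' m') = ((-1 : K) ^ i) • inrP (n + n') (h.bracket m m')
  bracket_rl : ∀ (n n' : ℕ) (m m' : M),
    mt.bracket (inrP n m) (inlP n' m') = inrP (n + n') (h.bracket m m')
  bracket_rr : ∀ (n n' : ℕ) (m m' : M),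
    mt.bracket (inrP n m) (inrP n' m') = 0

end PolyDt

section Fibre

variable {K : Type u} [Field K] {L : Type v} {M : Type v}
  [AddCommGroup L] [Module K L] [AddCommGroup M] [Module K M]

/-- The underlying module of the homotopy fibre
`TW(χ) = { (l, m(t,dt)) ∈ L × M[t,dt] | m(0,0) = 0, m(1,0) = χ(l) }`
of a morphism of DGLAs `χ : L → M`. -/
noncomputable def fibreSub {g : DGLAStruct K L} {h : DGLAStruct K M}
    (χ : DGLAStructHom g h) : Submodule K (L × PolyDt K M) :=
  LinearMap.ker
    ((evAt0.comp (LinearMap.snd K L (PolyDt K M))).prod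
      ((evAt1.comp (LinearMap.snd K L (PolyDt K M))) -
        χ.toFun.comp (LinearMap.fst K L (PolyDt K M))))

/-- The property that a DGLA structure `tw` on the module underlying the homotopy fibre
of `χ : L → M` is *the* homotopy fibre DGLA: differential, bracket and grading are
computed componentwise from `L` and `M[t,dt]`. -/
structure IsHomotopyFibre {g : DGLAStruct K L} {h : DGLAStruct K M}
    (χ : DGLAStructHom g h) (mt : DGLAStruct K (PolyDt K M))
    (tw : DGLAStruct K ↥(fibreSub χ)) : Prop where
  grading_eq : ∀ i : ℤ, tw.grading i =
    Submodule.comap (fibreSub χ).subtype ((g.grading i).prod (mt.grading i))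
  d_eq : ∀ v : fibreSub χ, (tw.d v : L × PolyDt K M) =
    (g.d (v : L × PolyDt K M).1, mt.d (v : L × PolyDt K M).2)
  bracket_eq : ∀ v w : fibreSub χ, (tw.bracket v w : L × PolyDt K M) =
    (g.bracket (v : L × PolyDt K M).1 (w : L × PolyDt K M).1,
      mt.bracket (v : L × PolyDt K M).2 (w : L × PolyDt K M).2)

end Fibre

/-- A Cartan homotopy between differential graded Lie algebras: a degree `-1` linear
map `i : L → M` such that `i_{[a,b]} = [i_a, d_M i_b]` and `[i_a, i_b] = 0`. -/
structure CartanHomotopy {K : Type u} [Field K] {L : Type v} {M : Type w}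
    [AddCommGroup L] [Module K L] [AddCommGroup M] [Module K M]
    (g : DGLAStruct K L) (h : DGLAStruct K M) : Type (max u v w) where
  toFun : L →ₗ[K] M
  map_grading : ∀ i : ℤ, ∀ x ∈ g.grading i, toFun x ∈ h.grading (i - 1)
  cartan_bracket : ∀ a b : L, toFun (g.bracket a b) = h.bracket (toFun a) (h.d (toFun b))
  cartan_square : ∀ a b : L, h.bracket (toFun a) (toFun b) = 0

/-- Let `L, M` be differential graded Lie algebras over a field `K`
of characteristic `0` and `i : L → M` a Cartan homotopy, i.e. a degree `−1` linear map
with `i_{[a,b]} = [i_a, d_M i_b]` and `[i_a, i_b] = 0` for all `a, b ∈ L`.  Then: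
* the Lie derivative `l : L → M`, `l_a = d_M i_a + i_{d_L a}`, is a morphism of
  differential graded Lie algebras;
* for any degree `−1` graded linear map `j`, the Cartan homotopy conditions are
  equivalent to `j_{[a,b]} = [j_a, l_b]` (where `l_b = d_M j_b + j_{d_L b}`) together
  with `[j_a, j_b] = 0`;
* as a morphism of complexes, `l` is homotopic to `0`, with homotopy `i`. -/
theorem lie_derivative_of_cartan_homotopy {K : Type u} [Field K] [CharZero K]
    {L M : Type u} [AddCommGroup L] [Module K L] [AddCommGroup M] [Module K M]
    (g : DGLAStruct K L) (h : DGLAStruct K M) (ci : CartanHomotopy g h) :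
    (∃ F : DGLAStructHom g h,
      ∀ a : L, F.toFun a = h.d (ci.toFun a) + ci.toFun (g.d a)) ∧
    (∀ j : L →ₗ[K] M, (∀ i : ℤ, ∀ x ∈ g.grading i, j x ∈ h.grading (i - 1)) →
      (((∀ a b : L, j (g.bracket a b) = h.bracket (j a) (h.d (j b))) ∧
          ∀ a b : L, h.bracket (j a) (j b) = 0) ↔
        ((∀ a b : L, j (g.bracket a b) = h.bracket (j a) (h.d (j b) + j (g.d b))) ∧
          ∀ a b : L, h.bracket (j a) (j b) = 0))) ∧
    (∃ H : L →ₗ[K] M, (∀ i : ℤ, ∀ x ∈ g.grading i, H x ∈ h.grading (i - 1)) ∧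
      ∀ a : L, (h.d (ci.toFun a) + ci.toFun (g.d a)) - 0 = h.d (H a) + H (g.d a)) := by
  have hbr : ∀ a b : L, h.d (ci.toFun (g.bracket a b)) + ci.toFun (g.d (g.bracket a b)) =
      h.bracket (h.d (ci.toFun a) + ci.toFun (g.d a)) (h.d (ci.toFun b) + ci.toFun (g.d b)) := by
    intro a b
    have ha : a ∈ ⨆ i, g.grading i := by
      rw [g.isInternal.submodule_iSup_eq_top]; trivial
    induction ha using Submodule.iSup_induction' with
    | mem p a ha =>
      have hia := ci.map_grading p a ha
      have e1 := h.bracket_leibniz (p - 1) _ hia (ci.toFun (g.d b))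
      rw [ci.cartan_square, map_zero] at e1
      have e2 := h.bracket_leibniz (p - 1) _ hia (h.d (ci.toFun b))
      rw [h.d_sq, map_zero, smul_zero, add_zero] at e2
      have hs : ((-1 : K) ^ (p - 1)) = -((-1 : K) ^ p) := by
        rw [zpow_sub_one₀ (by norm_num)]; norm_num
      rw [hs, neg_smul, ← sub_eq_add_neg, eq_comm, sub_eq_zero] at e1
      rw [ci.cartan_bracket, e2, g.bracket_leibniz p a ha b]
      simp only [map_add, map_smul, LinearMap.add_apply, ci.cartan_bracket, ci.cartan_square, e1]
      abel
    | zero => simp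
    | add x y _ _ hx hy =>
      have e : ∀ A B C D : M, (A + B) + (C + D) = (A + C) + (B + D) := fun A B C D => by abel
      simp only [map_add, LinearMap.add_apply] at hx hy ⊢
      rw [e, hx, hy]
      abel
  refine ⟨⟨⟨h.d.comp ci.toFun + ci.toFun.comp g.d, ?_, ?_, ?_⟩, ?_⟩, ?_, ?_⟩
  · intro i x hx
    have h1 := h.d_degree _ _ (ci.map_grading i x hx)
    have h2 := ci.map_grading _ _ (g.d_degree i x hx)
    rw [sub_add_cancel] at h1
    rw [add_sub_cancel_right] at h2
    exact (h.grading i).add_mem h1 h2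
  · intro x
    simp [g.d_sq, h.d_sq]
  · intro x y
    exact hbr x y
  · intro a
    rfl
  · intro j _
    constructor
    · rintro ⟨h1, h2⟩
      exact ⟨fun a b => by rw [map_add, h2, add_zero, h1], h2⟩
    · rintro ⟨h1, h2⟩
      exact ⟨fun a b => by rw [h1, map_add, h2, add_zero], h2⟩
  · exact ⟨ci.toFun, ci.map_grading, fun a => sub_zero _⟩
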